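/- There exists a constant C = C(m₁, m₂) such that for every s ∈ ℝ and every measurable function F : (0,∞) → [0,∞], e^{ρ s} ∫_{ℝ^{m₁} × ℝ^{m₂}} F(T_s(v,w)) dv dw ≤ C · ‖F‖_{L^{2,1}(ν)}, where ν is the measure (sinh t)^{m₁} (sinh 2t)^{m₂} dt on (0,∞) and ‖F‖_{L^{2,1}(ν)} = 2 ∫₀^∞ ν({t : F(t) > λ})^{1/2} dλ. (This is the coordinate form of Proposition 2: the Abel transform is bounded from L^{2,1}(G//K) to L^∞(A/W).) -/

import Mathlib

open MeasureTheory ENNReal NNReal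

noncomputable section

/-- The measure `ν = (sinh t)^{m₁} (sinh 2t)^{m₂} dt` on `(0,∞)`. -/
def nuMeasure (m₁ m₂ : ℕ) : Measure ℝ :=
  ((volume : Measure ℝ).restrict (Set.Ioi 0)).withDensity
    fun t => ENNReal.ofReal (Real.sinh t ^ m₁ * Real.sinh (2 * t) ^ m₂)

/-- The Lorentz quasi-norm `‖F‖_{L^{2,1}(ν)} = 2 ∫₀^∞ ν({t : F t > λ})^{1/2} dλ`. -/
def lorentz21 {α : Type*} [MeasurableSpace α] (μ : Measure α) (f : α → ℝ≥0∞) : ℝ≥0∞ :=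
  2 * ∫⁻ l in Set.Ioi (0 : ℝ), (μ {x | ENNReal.ofReal l < f x}) ^ (1 / 2 : ℝ)

/-- Polar coordinates for nonnegative radial functions. -/
lemma aux_polar (m : ℕ) (hm : 1 ≤ m) (f : ℝ → ℝ≥0∞) (hf : Measurable f) :
    ∫⁻ x : EuclideanSpace ℝ (Fin m), f ‖x‖ =
      (volume : Measure (EuclideanSpace ℝ (Fin m))).toSphere Set.univ *
        ∫⁻ r in Set.Ioi (0 : ℝ), ENNReal.ofReal (r ^ (m - 1)) * f r := by
  have : Nontrivial (EuclideanSpace ℝ (Fin m)) := by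
    have : Nonempty (Fin m) := ⟨⟨0, hm⟩⟩
    infer_instance
  set μ := (volume : Measure (EuclideanSpace ℝ (Fin m)))
  have h1 : ∫⁻ x, f ‖x‖ ∂μ =
      ∫⁻ x : ({(0 : EuclideanSpace ℝ (Fin m))}ᶜ : Set _), f ‖x.1‖ ∂(μ.comap (↑)) := by
    rw [lintegral_subtype_comap (measurableSet_singleton _).compl
      (fun x : EuclideanSpace ℝ (Fin m) => f ‖x‖), restrict_compl_singleton]
  have h2 : ∫⁻ x : ({(0 : EuclideanSpace ℝ (Fin m))}ᶜ : Set _), f ‖x.1‖ ∂(μ.comap (↑)) =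
      ∫⁻ x, f x.2 ∂μ.toSphere.prod (.volumeIoiPow (m - 1)) := by
    have := μ.measurePreserving_homeomorphUnitSphereProd.lintegral_comp
      (f := fun p => f p.2.1) (by fun_prop)
    simpa using this
  rw [h1, h2, lintegral_prod _ (by fun_prop)]
  simp only [lintegral_const]
  rw [mul_comm]
  congr 1
  rw [Measure.volumeIoiPow, lintegral_withDensity_eq_lintegral_mul _ (by fun_prop) (by fun_prop)]
  exact lintegral_subtype_comap measurableSet_Ioi
    (fun r : ℝ => ENNReal.ofReal (r ^ (m - 1)) * f r)

lemma aux_scale1 (m : ℕ) (b : ℝ) (hb : 0 < b) (f : ℝ → ℝ≥0∞) (hf : Measurable f) :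
    ENNReal.ofReal (b ^ m) * ∫⁻ x : EuclideanSpace ℝ (Fin m), f (b * ‖x‖) =
      ∫⁻ x : EuclideanSpace ℝ (Fin m), f ‖x‖ := by
  have h := Measure.map_addHaar_smul (volume : Measure (EuclideanSpace ℝ (Fin m))) hb.ne'
  have h2 : ∫⁻ x : EuclideanSpace ℝ (Fin m), f (b * ‖x‖) =
      ∫⁻ x, f ‖x‖ ∂(Measure.map (b • ·) (volume : Measure (EuclideanSpace ℝ (Fin m)))) := by
    rw [lintegral_map (by fun_prop) (by fun_prop)]
    simp [norm_smul, abs_of_pos hb]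
  rw [h2, h, lintegral_smul_measure, smul_eq_mul, ← mul_assoc, ← ENNReal.ofReal_mul (by positivity)]
  rw [abs_of_pos (by positivity)]
  simp [hb.ne']

lemma aux_scale (m₁ m₂ : ℕ) (s : ℝ) (H : ℝ → ℝ → ℝ≥0∞)
    (hH : Measurable (Function.uncurry H)) :
    ENNReal.ofReal (Real.exp (((m₁ : ℝ) + 2 * (m₂ : ℝ)) / 2 * s)) *
      (∫⁻ p : EuclideanSpace ℝ (Fin m₁) × EuclideanSpace ℝ (Fin m₂),
        H (Real.exp (s / 2) * ‖p.1‖) (Real.exp s * ‖p.2‖)) =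
      ∫⁻ v : EuclideanSpace ℝ (Fin m₁), ∫⁻ w : EuclideanSpace ℝ (Fin m₂), H ‖v‖ ‖w‖ := by
  have hH' : ∀ {α : Type} [MeasurableSpace α] (f g : α → ℝ), Measurable f → Measurable g →
      Measurable (fun x => H (f x) (g x)) := fun f g hf hg => hH.comp (hf.prodMk hg)
  rw [Measure.volume_eq_prod, lintegral_prod _ (hH' _ _ (by fun_prop) (by fun_prop)).aemeasurable]
  have e : ENNReal.ofReal (Real.exp (((m₁ : ℝ) + 2 * (m₂ : ℝ)) / 2 * s)) =
      ENNReal.ofReal (Real.exp (s / 2) ^ m₁) * ENNReal.ofReal (Real.exp s ^ m₂) := by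
    rw [← ENNReal.ofReal_mul (by positivity), ← Real.exp_nat_mul, ← Real.exp_nat_mul,
      ← Real.exp_add]
    congr 2; ring
  have hm : Measurable (fun x : ℝ => ∫⁻ w : EuclideanSpace ℝ (Fin m₂), H x ‖w‖) :=
    Measurable.lintegral_prod_right' (f := fun p : ℝ × EuclideanSpace ℝ (Fin m₂) => H p.1 ‖p.2‖)
      (hH' _ _ (by fun_prop) (by fun_prop))
  rw [e, mul_assoc, ← lintegral_const_mul']
  · have : ∀ x : ℝ, ENNReal.ofReal (Real.exp s ^ m₂) *
        ∫⁻ w : EuclideanSpace ℝ (Fin m₂), H x (Real.exp s * ‖w‖) =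
        ∫⁻ w : EuclideanSpace ℝ (Fin m₂), H x ‖w‖ := fun x =>
      aux_scale1 m₂ _ (Real.exp_pos s) (H x) (hH' _ _ (by fun_prop) (by fun_prop))
    simp only [this]
    exact aux_scale1 m₁ _ (Real.exp_pos _)
      (fun x => ∫⁻ w : EuclideanSpace ℝ (Fin m₂), H x ‖w‖) hm
  · exact ENNReal.ofReal_ne_top

lemma aux_layer {α : Type*} [MeasurableSpace α] (μ : Measure α) [SFinite μ] (f : α → ℝ≥0∞)
    (hf : Measurable f) :
    ∫⁻ x, f x ∂μ = ∫⁻ l in Set.Ioi (0 : ℝ), μ {x | ENNReal.ofReal l < f x} := by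
  have h1 : ∀ x, f x = ∫⁻ l in Set.Ioi (0 : ℝ),
      ({p : α × ℝ | ENNReal.ofReal p.2 < f p.1}).indicator 1 (x, l) := by
    intro x
    have hms : MeasurableSet {l : ℝ | ENNReal.ofReal l < f x} :=
      measurableSet_lt (by fun_prop) (by fun_prop)
    have : (fun l : ℝ => ({p : α × ℝ | ENNReal.ofReal p.2 < f p.1}).indicator
        (1 : α × ℝ → ℝ≥0∞) (x, l)) = ({l : ℝ | ENNReal.ofReal l < f x}).indicator 1 := by
      ext l; simp [Set.indicator]
    rw [this, lintegral_indicator_one hms, Measure.restrict_apply hms]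
    by_cases hx : f x = ⊤
    · rw [hx]
      simp
    · have : {l : ℝ | ENNReal.ofReal l < f x} ∩ Set.Ioi 0 = Set.Ioo 0 (f x).toReal := by
        ext l
        simp only [Set.mem_inter_iff, Set.mem_ofPred_eq, Set.mem_Ioi, Set.mem_Ioo]
        constructor
        · rintro ⟨h, h0⟩
          exact ⟨h0, (ENNReal.ofReal_lt_iff_lt_toReal h0.le hx).1 h⟩
        · rintro ⟨h0, h⟩
          exact ⟨(ENNReal.ofReal_lt_iff_lt_toReal h0.le hx).2 h, h0⟩
      rw [this, Real.volume_Ioo, sub_zero, ENNReal.ofReal_toReal hx]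
  have hms : MeasurableSet {p : α × ℝ | ENNReal.ofReal p.2 < f p.1} :=
    measurableSet_lt (by fun_prop) (by fun_prop)
  calc ∫⁻ x, f x ∂μ = ∫⁻ x, ∫⁻ (l : ℝ) in Set.Ioi (0 : ℝ),
      ({p : α × ℝ | ENNReal.ofReal p.2 < f p.1}).indicator 1 (x, l) ∂(volume : Measure ℝ) ∂μ :=
        lintegral_congr h1
    _ = ∫⁻ l in Set.Ioi (0 : ℝ), ∫⁻ x,
      ({p : α × ℝ | ENNReal.ofReal p.2 < f p.1}).indicator 1 (x, l) ∂μ :=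
        lintegral_lintegral_swap (f := fun x l =>
          ({p : α × ℝ | ENNReal.ofReal p.2 < f p.1}).indicator 1 (x, l))
          ((measurable_one.indicator hms).aemeasurable)
    _ = _ := by
      refine lintegral_congr fun l => ?_
      have : (fun x : α => ({p : α × ℝ | ENNReal.ofReal p.2 < f p.1}).indicator
        (1 : α × ℝ → ℝ≥0∞) (x, l)) = ({x | ENNReal.ofReal l < f x}).indicator 1 := by
        ext l; simp [Set.indicator]
      rw [this, lintegral_indicator_one (measurableSet_lt (by fun_prop) (by fun_prop))]

/-- change of variables `q = √(y - B)` -/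
lemma aux_cov1 (B : ℝ) (h : ℝ → ℝ≥0∞) :
    ∫⁻ q in Set.Ioi (0 : ℝ), h q =
      ∫⁻ y in Set.Ioi B, ENNReal.ofReal (1 / (2 * √(y - B))) * h (√(y - B)) := by
  have him : (fun y => √(y - B)) '' Set.Ioi B = Set.Ioi 0 := by
    ext q
    simp only [Set.mem_image, Set.mem_Ioi]
    constructor
    · rintro ⟨y, hy, rfl⟩
      exact Real.sqrt_pos.2 (by linarith)
    · intro hq
      refine ⟨B + q ^ 2, by nlinarith, ?_⟩
      simp [Real.sqrt_sq hq.le]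
  rw [← him, lintegral_image_eq_lintegral_abs_deriv_mul (f' := fun y => 1 / (2 * √(y - B)))
    measurableSet_Ioi]
  · refine setLIntegral_congr_fun measurableSet_Ioi fun y hy => ?_
    rw [abs_of_nonneg (by positivity)]
  · intro y hy
    have hy' : y - B ≠ 0 := (sub_pos.2 hy).ne'
    exact (((hasDerivAt_id y).sub_const B).sqrt hy').hasDerivWithinAt
  · intro y hy z hz hyz
    simp only [Set.mem_Ioi] at hy hz
    have := (Real.sqrt_inj (by linarith : 0 ≤ y - B) (by linarith : 0 ≤ z - B)).1 hyz
    linarith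

/-- change of variables `y = (cosh t)^2` -/
lemma aux_cov2 (s : ℝ) (h : ℝ → ℝ≥0∞) :
    ∫⁻ y in Set.Ioi (Real.cosh s ^ 2), h y ≤
      ∫⁻ t in Set.Ioi |s|, ENNReal.ofReal (2 * Real.cosh t * Real.sinh t) *
        h (Real.cosh t ^ 2) := by
  have him : Set.Ioi (Real.cosh s ^ 2) ⊆ (fun t => Real.cosh t ^ 2) '' Set.Ioi |s| := by
    intro y hy
    simp only [Set.mem_Ioi] at hy
    have hc := Real.one_le_cosh s
    have hy1 : Real.cosh s < √y := Real.lt_sqrt_of_sq_lt hy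
    refine ⟨Real.arcosh √y, ?_, ?_⟩
    · have := (Real.arcosh_lt_arcosh (by linarith) (by linarith)).2 hy1
      rw [← Real.cosh_abs, Real.arcosh_cosh (abs_nonneg s)] at this
      exact this
    · simp only []
      rw [Real.cosh_arcosh (by linarith), Real.sq_sqrt (by nlinarith)]
  refine (lintegral_mono_set him).trans ?_
  rw [lintegral_image_eq_lintegral_abs_deriv_mul
    (f' := fun t => 2 * Real.cosh t * Real.sinh t) measurableSet_Ioi]
  · refine (setLIntegral_congr_fun measurableSet_Ioi fun t ht => ?_).le
    have : 0 ≤ Real.sinh t := Real.sinh_nonneg_iff.2 ((abs_nonneg s).trans (le_of_lt ht))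
    have := Real.cosh_pos t
    rw [abs_of_nonneg (by positivity)]
  · intro t ht
    have := ((Real.hasDerivAt_cosh t).pow 2).hasDerivWithinAt (s := Set.Ioi |s|)
    simp only [Nat.cast_ofNat, Nat.add_one_sub_one, pow_one] at this
    exact this
  · intro a ha b hb hab
    simp only [Set.mem_Ioi] at ha hb
    have h0 := abs_nonneg s
    have : Real.cosh a = Real.cosh b :=
      (pow_left_inj₀ (Real.cosh_pos a).le (Real.cosh_pos b).le two_ne_zero).1 hab
    exact Real.cosh_injOn (Set.mem_Ici.2 (by linarith)) (Set.mem_Ici.2 (by linarith)) this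

/-- change of variables `r = √(√y - c)` -/
lemma aux_cov3 (c : ℝ) (hc : 0 < c) (h : ℝ → ℝ≥0∞) :
    ∫⁻ q in Set.Ioi (0 : ℝ), h q =
      ∫⁻ y in Set.Ioi (c ^ 2), ENNReal.ofReal (1 / (2 * √y) / (2 * √(√y - c))) *
        h (√(√y - c)) := by
  have him : (fun y => √(√y - c)) '' Set.Ioi (c ^ 2) = Set.Ioi 0 := by
    ext q
    simp only [Set.mem_image, Set.mem_Ioi]
    constructor
    · rintro ⟨y, hy, rfl⟩
      exact Real.sqrt_pos.2 (by linarith [Real.lt_sqrt_of_sq_lt hy])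
    · intro hq
      refine ⟨(c + q ^ 2) ^ 2, ?_, ?_⟩
      · have : 0 < q ^ 2 := by positivity
        nlinarith
      · rw [Real.sqrt_sq (by positivity)]
        simp [Real.sqrt_sq hq.le]
  rw [← him, lintegral_image_eq_lintegral_abs_deriv_mul
    (f' := fun y => 1 / (2 * √y) / (2 * √(√y - c))) measurableSet_Ioi]
  · refine setLIntegral_congr_fun measurableSet_Ioi fun y hy => ?_
    rw [abs_of_nonneg (by positivity)]
  · intro y hy
    have hy0 : y ≠ 0 := by
      have : c ^ 2 < y := hy
      nlinarith [sq_nonneg c]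
    have hy' : √y - c ≠ 0 := by
      have := Real.lt_sqrt_of_sq_lt hy
      linarith
    exact ((((hasDerivAt_id y).sqrt hy0).sub_const c).sqrt hy').hasDerivWithinAt
  · intro y hy z hz hyz
    have h1 := Real.lt_sqrt_of_sq_lt hy
    have h2 := Real.lt_sqrt_of_sq_lt hz
    simp only [Set.mem_Ioi] at hy hz
    have h3 := (Real.sqrt_inj (by linarith : 0 ≤ √y - c) (by linarith : 0 ≤ √z - c)).1 hyz
    exact (Real.sqrt_inj (by nlinarith) (by nlinarith)).1 (by linarith)

lemma aux_sing (ξ : ℝ) (hξ : 0 < ξ) :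
    ∫⁻ r in Set.Ioo 0 ξ, ENNReal.ofReal (1 / √(ξ - r)) ≤ ENNReal.ofReal (2 * √ξ) := by
  have him : Set.Ioo 0 ξ ⊆ (fun q => ξ - q ^ 2) '' Set.Ioo 0 √ξ := by
    rintro r ⟨h0, h1⟩
    refine ⟨√(ξ - r), ⟨Real.sqrt_pos.2 (by linarith), Real.sqrt_lt_sqrt (by linarith)
      (by linarith)⟩, ?_⟩
    simp only []
    rw [Real.sq_sqrt (by linarith)]; ring
  refine (lintegral_mono_set him).trans ?_
  rw [lintegral_image_eq_lintegral_abs_deriv_mul (f' := fun q => -(2 * q)) measurableSet_Ioo]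
  · have : ∀ q ∈ Set.Ioo 0 √ξ, ENNReal.ofReal |-(2 * q)| *
        ENNReal.ofReal (1 / √(ξ - (ξ - q ^ 2))) = 2 := by
      rintro q ⟨h0, h1⟩
      rw [← ENNReal.ofReal_mul (by positivity), abs_neg, abs_of_pos (by positivity),
        show ξ - (ξ - q ^ 2) = q ^ 2 by ring, Real.sqrt_sq h0.le]
      have : 2 * q * (1 / q) = 2 := by field_simp
      rw [this]; simp
    rw [setLIntegral_congr_fun measurableSet_Ioo this]
    simp [ENNReal.ofReal_mul]
  · intro q hq
    have := ((hasDerivAt_pow 2 q).const_sub ξ).hasDerivWithinAt (s := Set.Ioo 0 √ξ)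
    simpa using this
  · rintro a ⟨ha, _⟩ b ⟨hb, _⟩ hab
    have : a ^ 2 = b ^ 2 := by
      simp only [] at hab
      linarith
    exact (pow_left_inj₀ ha.le hb.le two_ne_zero).1 this

def auxD (m₁ m₂ : ℕ) (c y : ℝ) : ℝ :=
  √(√y - c) ^ (m₁ + m₂) * √(√y) ^ m₂ / ((√y - c) * √y)

lemma aux_inner (k j : ℕ) (c y : ℝ) (hc : 0 < c) (hy : c ^ 2 < y) :
    ∫⁻ r in Set.Ioi (0 : ℝ), ({r : ℝ | (c + r ^ 2) ^ 2 < y}).indicator (fun r =>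
      ENNReal.ofReal (r ^ k) * (ENNReal.ofReal (1 / (2 * √(y - (c + r ^ 2) ^ 2))) *
        ENNReal.ofReal (√(y - (c + r ^ 2) ^ 2) ^ j))) r ≤
      ENNReal.ofReal (√2 ^ j) * ENNReal.ofReal (auxD (k + 1) (j + 1) c y) := by
  have hca : c < √y := Real.lt_sqrt_of_sq_lt hy
  have hy0 : 0 < y := by nlinarith
  have ha : 0 < √y := by linarith
  have hη : 0 < √(√y) := Real.sqrt_pos.2 ha
  have hξ : 0 < √(√y - c) := Real.sqrt_pos.2 (by linarith)
  have hη2 : √(√y) ^ 2 = √y := Real.sq_sqrt ha.le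
  have hξ2 : √(√y - c) ^ 2 = √y - c := Real.sq_sqrt (by linarith)
  have hyy : √y ^ 2 = y := Real.sq_sqrt hy0.le
  set a := √y with ha_def
  set η := √a with hη_def
  set ξ := √(a - c) with hξ_def
  have hsξ : 0 < √ξ := Real.sqrt_pos.2 hξ
  set A := ξ ^ k * (√2 * ξ * η) ^ j / (2 * (√ξ * η)) with hA
  have hA0 : 0 ≤ A := by positivity
  have hpt : ∀ r ∈ Set.Ioi (0 : ℝ), ({r : ℝ | (c + r ^ 2) ^ 2 < y}).indicator (fun r =>
      ENNReal.ofReal (r ^ k) * (ENNReal.ofReal (1 / (2 * √(y - (c + r ^ 2) ^ 2))) *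
        ENNReal.ofReal (√(y - (c + r ^ 2) ^ 2) ^ j))) r ≤
      (Set.Ioo 0 ξ).indicator (fun r => ENNReal.ofReal A * ENNReal.ofReal (1 / √(ξ - r))) r := by
    intro r hr
    simp only [Set.mem_Ioi] at hr
    by_cases hb : (c + r ^ 2) ^ 2 < y
    · have hba : c + r ^ 2 < a := Real.lt_sqrt_of_sq_lt hb
      have hrξ : r < ξ := by
        rw [hξ_def]; exact Real.lt_sqrt_of_sq_lt (by linarith)
      rw [Set.indicator_of_mem (by exact hb), Set.indicator_of_mem (by exact ⟨hr, hrξ⟩)]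
      have hrr : 0 < ξ - r := by linarith
      rw [← ENNReal.ofReal_mul (by positivity), ← ENNReal.ofReal_mul (by positivity),
        ← ENNReal.ofReal_mul hA0]
      apply ENNReal.ofReal_le_ofReal
      have hfac : y - (c + r ^ 2) ^ 2 = (ξ ^ 2 - r ^ 2) * (a + (c + r ^ 2)) := by
        rw [hξ2, ← hyy]; ring
      have hup : √(y - (c + r ^ 2) ^ 2) ≤ √2 * ξ * η := by
        apply Real.sqrt_le_iff.2 ⟨by positivity, ?_⟩
        rw [mul_pow, mul_pow, Real.sq_sqrt (by norm_num : (0:ℝ) ≤ 2), hfac, hη2, mul_assoc,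
          mul_left_comm]
        apply mul_le_mul (by nlinarith) (by linarith) (by positivity) (by positivity)
      have hlow : √(ξ - r) * (√ξ * η) ≤ √(y - (c + r ^ 2) ^ 2) := by
        apply Real.le_sqrt_of_sq_le
        rw [mul_pow, mul_pow, Real.sq_sqrt hrr.le, Real.sq_sqrt hξ.le, hη2, hfac]
        have h1 : (ξ - r) * ξ ≤ ξ ^ 2 - r ^ 2 := by nlinarith
        have h2 : a ≤ a + (c + r ^ 2) := by nlinarith
        calc (ξ - r) * (ξ * a) = ((ξ - r) * ξ) * a := by ring
          _ ≤ _ := mul_le_mul h1 h2 ha.le (le_trans (by positivity) h1)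
      have hsr : 0 < √(ξ - r) := Real.sqrt_pos.2 hrr
      calc r ^ k * (1 / (2 * √(y - (c + r ^ 2) ^ 2)) * √(y - (c + r ^ 2) ^ 2) ^ j)
          ≤ ξ ^ k * (1 / (2 * (√(ξ - r) * (√ξ * η))) * (√2 * ξ * η) ^ j) := by
            gcongr
        _ = A * (1 / √(ξ - r)) := by
            rw [hA]; field_simp
    · rw [Set.indicator_of_notMem (by exact hb)]
      exact zero_le
  refine (setLIntegral_mono' measurableSet_Ioi hpt).trans ?_
  refine (setLIntegral_le_lintegral _ _).trans ?_
  rw [lintegral_indicator measurableSet_Ioo, lintegral_const_mul' _ _ ENNReal.ofReal_ne_top]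
  refine (mul_le_mul_right (aux_sing ξ hξ) _).trans ?_
  rw [← ENNReal.ofReal_mul hA0, ← ENNReal.ofReal_mul (by positivity)]
  apply ENNReal.ofReal_le_ofReal
  apply le_of_eq
  rw [auxD, ← ha_def, ← hη_def, ← hξ_def, ← hξ2, hA]
  rw [show a = η ^ 2 from hη2.symm]
  field_simp
  ring

lemma aux_density (m₁ m₂ : ℕ) (hm₁ : 1 ≤ m₁) : ∃ K : ℝ≥0∞, K ≠ ⊤ ∧ ∀ (c : ℝ), 0 < c →
    ∀ G : ℝ → ℝ≥0∞, Measurable G →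
    ∫⁻ v : EuclideanSpace ℝ (Fin m₁), ∫⁻ w : EuclideanSpace ℝ (Fin m₂),
      G ((c + ‖v‖ ^ 2) ^ 2 + ‖w‖ ^ 2) ≤
    K * ∫⁻ y in Set.Ioi (c ^ 2), G y * ENNReal.ofReal (auxD m₁ m₂ c y) := by
  obtain ⟨k, rfl⟩ : ∃ k, m₁ = k + 1 := ⟨m₁ - 1, by omega⟩
  set S₁ := (volume : Measure (EuclideanSpace ℝ (Fin (k + 1)))).toSphere Set.univ with hS₁
  have hS₁t : S₁ ≠ ⊤ := measure_ne_top _ _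
  rcases m₂ with _ | j
  · refine ⟨volume (Set.univ : Set (EuclideanSpace ℝ (Fin 0))) * S₁,
      ENNReal.mul_ne_top isCompact_univ.measure_lt_top.ne hS₁t, ?_⟩
    intro c hc G hG
    have h0 : ∀ w : EuclideanSpace ℝ (Fin 0), ‖w‖ = 0 := fun w => by
      rw [Subsingleton.elim w 0, norm_zero]
    simp only [h0, lintegral_const]
    rw [lintegral_mul_const _ (by fun_prop), mul_comm, mul_assoc]
    refine mul_le_mul_right ?_ _
    have := aux_polar (k + 1) hm₁ (fun r => G ((c + r ^ 2) ^ 2 + 0 ^ 2)) (by fun_prop)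
    rw [this, ← hS₁, aux_cov3 c hc]
    refine mul_le_mul_right ?_ _
    refine setLIntegral_mono' measurableSet_Ioi fun y hy => ?_
    simp only [Set.mem_Ioi] at hy
    have hca : c < √y := Real.lt_sqrt_of_sq_lt hy
    have hxi : 0 < √(√y - c) := Real.sqrt_pos.2 (by linarith)
    have e : (c + √(√y - c) ^ 2) ^ 2 + 0 ^ 2 = y := by
      rw [Real.sq_sqrt (by linarith)]
      ring_nf
      exact Real.sq_sqrt (by nlinarith)
    rw [e, ← mul_assoc, mul_comm, ← ENNReal.ofReal_mul (by positivity)]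
    refine mul_le_mul_right (ENNReal.ofReal_le_ofReal ?_) _
    rw [auxD]
    have hξ2 : √(√y - c) ^ 2 = √y - c := Real.sq_sqrt (by linarith)
    nth_rewrite 4 [← hξ2]
    have hy0 : 0 < √y := by linarith
    generalize √(√y - c) = ξ at *
    simp only [Nat.add_sub_cancel, add_zero, pow_zero, mul_one]
    rw [div_div, one_div, inv_mul_eq_div, div_le_div_iff₀ (by positivity) (by positivity)]
    have : 0 < ξ ^ k * ξ ^ 2 * √y := by positivity
    calc _ = ξ ^ k * ξ ^ 2 * √y := by ring
      _ ≤ 4 * (ξ ^ k * ξ ^ 2 * √y) := by linarith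
      _ = _ := by ring
  · set S₂ := (volume : Measure (EuclideanSpace ℝ (Fin (j + 1)))).toSphere Set.univ with hS₂
    have hS₂t : S₂ ≠ ⊤ := measure_ne_top _ _
    refine ⟨S₂ * S₁ * ENNReal.ofReal (√2 ^ j), ENNReal.mul_ne_top
      (ENNReal.mul_ne_top hS₂t hS₁t) ENNReal.ofReal_ne_top, ?_⟩
    intro c hc G hG
    have h1 : ∀ B : ℝ, ∫⁻ w : EuclideanSpace ℝ (Fin (j + 1)), G (B + ‖w‖ ^ 2) =
        S₂ * ∫⁻ q in Set.Ioi (0 : ℝ), ENNReal.ofReal (q ^ j) * G (B + q ^ 2) := fun B =>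
      aux_polar (j + 1) (by omega) (fun q => G (B + q ^ 2)) (by fun_prop)
    have h2 : ∀ B : ℝ, ∫⁻ q in Set.Ioi (0 : ℝ), ENNReal.ofReal (q ^ j) * G (B + q ^ 2) =
        ∫⁻ y in Set.Ioi B, G y * (ENNReal.ofReal (1 / (2 * √(y - B))) *
          ENNReal.ofReal (√(y - B) ^ j)) := by
      intro B
      rw [aux_cov1 B]
      refine setLIntegral_congr_fun measurableSet_Ioi fun y hy => ?_
      simp only [Set.mem_Ioi] at hy
      rw [Real.sq_sqrt (by linarith), add_sub_cancel]
      ring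
    simp only [h1]
    rw [lintegral_const_mul' _ _ hS₂t, mul_assoc, mul_assoc]
    refine mul_le_mul_right ?_ _
    have hmeas : Measurable (fun B : ℝ =>
        ∫⁻ q in Set.Ioi (0 : ℝ), ENNReal.ofReal (q ^ j) * G (B + q ^ 2)) :=
      Measurable.lintegral_prod_right' (f := fun p : ℝ × ℝ =>
        ENNReal.ofReal (p.2 ^ j) * G (p.1 + p.2 ^ 2)) (by fun_prop)
    have h3 := aux_polar (k + 1) hm₁ (fun r => ∫⁻ q in Set.Ioi (0 : ℝ),
      ENNReal.ofReal (q ^ j) * G ((c + r ^ 2) ^ 2 + q ^ 2)) (hmeas.comp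
        (g := fun B : ℝ => ∫⁻ q in Set.Ioi (0 : ℝ), ENNReal.ofReal (q ^ j) * G (B + q ^ 2))
        (f := fun r : ℝ => (c + r ^ 2) ^ 2) (by fun_prop))
    rw [h3, ← hS₁]
    refine mul_le_mul_right ?_ _
    simp only [h2, Nat.add_sub_cancel]
    set Q : ℝ → ℝ → ℝ≥0∞ := fun r y => ({p : ℝ × ℝ | (c + p.1 ^ 2) ^ 2 < p.2}).indicator
      (fun p => G p.2 * (ENNReal.ofReal (p.1 ^ k) *
        (ENNReal.ofReal (1 / (2 * √(p.2 - (c + p.1 ^ 2) ^ 2))) *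
          ENNReal.ofReal (√(p.2 - (c + p.1 ^ 2) ^ 2) ^ j)))) (r, y) with hQ
    have hset : MeasurableSet {p : ℝ × ℝ | (c + p.1 ^ 2) ^ 2 < p.2} :=
      measurableSet_lt (by fun_prop) (by fun_prop)
    have hQm : Measurable (Function.uncurry Q) := by
      apply Measurable.indicator _ hset
      fun_prop
    have h4 : ∀ r : ℝ, ENNReal.ofReal (r ^ k) * ∫⁻ y in Set.Ioi ((c + r ^ 2) ^ 2),
        G y * (ENNReal.ofReal (1 / (2 * √(y - (c + r ^ 2) ^ 2))) *
          ENNReal.ofReal (√(y - (c + r ^ 2) ^ 2) ^ j)) = ∫⁻ y, Q r y := by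
      intro r
      rw [← lintegral_const_mul' _ _ ENNReal.ofReal_ne_top, ← lintegral_indicator measurableSet_Ioi]
      refine lintegral_congr fun y => ?_
      by_cases hb : (c + r ^ 2) ^ 2 < y
      · rw [Set.indicator_of_mem (by exact hb), hQ]
        simp only []
        rw [Set.indicator_of_mem (by exact hb)]
        simp only []
        ring
      · rw [Set.indicator_of_notMem (by exact hb), hQ]
        simp only []
        rw [Set.indicator_of_notMem (by exact hb)]
    simp only [h4]
    rw [lintegral_lintegral_swap hQm.aemeasurable, ← lintegral_const_mul' _ _ ENNReal.ofReal_ne_top,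
      ← lintegral_indicator measurableSet_Ioi]
    refine lintegral_mono fun y => ?_
    have h5 : ∀ r, Q r y = G y * ({r : ℝ | (c + r ^ 2) ^ 2 < y}).indicator (fun r =>
      ENNReal.ofReal (r ^ k) * (ENNReal.ofReal (1 / (2 * √(y - (c + r ^ 2) ^ 2))) *
        ENNReal.ofReal (√(y - (c + r ^ 2) ^ 2) ^ j))) r := by
      intro r
      simp only [hQ, Set.indicator, Set.mem_ofPred_eq]
      split_ifs <;> simp
    simp only [h5]
    have hset2 : MeasurableSet {r : ℝ | (c + r ^ 2) ^ 2 < y} :=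
      measurableSet_lt (by fun_prop) (by fun_prop)
    rw [lintegral_const_mul _ (Measurable.indicator (by fun_prop) hset2)]
    by_cases hy : c ^ 2 < y
    · rw [Set.indicator_of_mem (by exact hy), mul_left_comm]
      exact mul_le_mul_right (aux_inner k j c y hc hy) _
    · have : ∀ r : ℝ, ({r : ℝ | (c + r ^ 2) ^ 2 < y}).indicator (fun r =>
        ENNReal.ofReal (r ^ k) * (ENNReal.ofReal (1 / (2 * √(y - (c + r ^ 2) ^ 2))) *
        ENNReal.ofReal (√(y - (c + r ^ 2) ^ 2) ^ j))) r = 0 := by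
        intro r
        apply Set.indicator_of_notMem
        intro h
        have h' : (c + r ^ 2) ^ 2 < y := h
        have := sq_nonneg r
        nlinarith
      simp only [this, lintegral_zero, mul_zero]
      exact zero_le

lemma aux_ball (m₁ m₂ : ℕ) : ∃ K : ℝ≥0∞, K ≠ ⊤ ∧ ∀ (c X : ℝ), 0 < c → 0 < X →
    ∫⁻ v : EuclideanSpace ℝ (Fin m₁), ∫⁻ w : EuclideanSpace ℝ (Fin m₂),
      (Set.Iic ((c + X) ^ 2)).indicator (1 : ℝ → ℝ≥0∞) ((c + ‖v‖ ^ 2) ^ 2 + ‖w‖ ^ 2) ≤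
    K * ENNReal.ofReal (√X ^ (m₁ + m₂) * √(c + X) ^ m₂) := by
  set B₁ := volume (Metric.ball (0 : EuclideanSpace ℝ (Fin m₁)) 1) with hB₁
  set B₂ := volume (Metric.ball (0 : EuclideanSpace ℝ (Fin m₂)) 1) with hB₂
  refine ⟨B₁ * B₂ * ENNReal.ofReal (√2 ^ m₂), ENNReal.mul_ne_top (ENNReal.mul_ne_top
    measure_ball_lt_top.ne measure_ball_lt_top.ne) ENNReal.ofReal_ne_top, ?_⟩
  intro c X hc hX
  have hpt : ∀ (v : EuclideanSpace ℝ (Fin m₁)) (w : EuclideanSpace ℝ (Fin m₂)),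
      (Set.Iic ((c + X) ^ 2)).indicator (1 : ℝ → ℝ≥0∞) ((c + ‖v‖ ^ 2) ^ 2 + ‖w‖ ^ 2) ≤
      (Metric.closedBall (0 : EuclideanSpace ℝ (Fin m₁)) √X).indicator 1 v *
      (Metric.closedBall (0 : EuclideanSpace ℝ (Fin m₂)) (√2 * √X * √(c + X))).indicator 1 w := by
    intro v w
    by_cases h : (c + ‖v‖ ^ 2) ^ 2 + ‖w‖ ^ 2 ≤ (c + X) ^ 2
    · have hv : ‖v‖ ≤ √X := by
        apply Real.le_sqrt_of_sq_le
        have h1 : (c + ‖v‖ ^ 2) ^ 2 ≤ (c + X) ^ 2 := by nlinarith [sq_nonneg ‖w‖]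
        have := (pow_le_pow_iff_left₀ (by positivity) (by positivity) two_ne_zero).1 h1
        linarith
      have hw : ‖w‖ ≤ √2 * √X * √(c + X) := by
        apply le_of_sq_le_sq _ (by positivity)
        rw [mul_pow, mul_pow, Real.sq_sqrt (by norm_num), Real.sq_sqrt hX.le,
          Real.sq_sqrt (by linarith)]
        have : 0 ≤ c * ‖v‖ ^ 2 := by positivity
        nlinarith [sq_nonneg (‖v‖ ^ 2), sq_nonneg X]
      rw [Set.indicator_of_mem (by exact h), Set.indicator_of_mem (by simpa using hv),
        Set.indicator_of_mem (by simpa using hw)]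
      simp
    · rw [Set.indicator_of_notMem (by exact h)]
      exact zero_le
  refine (lintegral_mono fun v => lintegral_mono fun w => hpt v w).trans ?_
  have h1 : ∀ v : EuclideanSpace ℝ (Fin m₁), (Metric.closedBall (0 : EuclideanSpace ℝ (Fin m₁))
      √X).indicator (1 : EuclideanSpace ℝ (Fin m₁) → ℝ≥0∞) v ≠ ⊤ := by
    intro v
    by_cases h : v ∈ Metric.closedBall (0 : EuclideanSpace ℝ (Fin m₁)) √X <;> simp [Set.indicator, h]
  simp_rw [lintegral_const_mul' _ _ (h1 _)]
  rw [lintegral_indicator_one Metric.isClosed_closedBall.measurableSet,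
    lintegral_mul_const _ (measurable_one.indicator Metric.isClosed_closedBall.measurableSet),
    lintegral_indicator_one Metric.isClosed_closedBall.measurableSet,
    Measure.addHaar_closedBall _ _ (by positivity), Measure.addHaar_closedBall _ _ (by positivity),
    ← hB₁, ← hB₂, finrank_euclideanSpace_fin, finrank_euclideanSpace_fin]
  apply le_of_eq
  have e : ENNReal.ofReal (√X ^ m₁) * ENNReal.ofReal ((√2 * √X * √(c + X)) ^ m₂) =
      ENNReal.ofReal (√2 ^ m₂) * ENNReal.ofReal (√X ^ (m₁ + m₂) * √(c + X) ^ m₂) := by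
    rw [← ENNReal.ofReal_mul (by positivity), ← ENNReal.ofReal_mul (by positivity)]
    congr 1; ring
  calc _ = B₁ * B₂ * (ENNReal.ofReal (√X ^ m₁) *
        ENNReal.ofReal ((√2 * √X * √(c + X)) ^ m₂)) := by ring
    _ = _ := by rw [e]; ring

lemma aux_level (m₁ m₂ : ℕ) (hm₁ : 1 ≤ m₁) (c R : ℝ) (hc : 1 ≤ c) (hR : 0 < R) :
    ∃ X, 0 < X ∧ √X ^ (m₁ + m₂) * √(c + X) ^ m₂ = R := by
  set M : ℝ → ℝ := fun X => √X ^ (m₁ + m₂) * √(c + X) ^ m₂ with hM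
  have hcont : ContinuousOn M (Set.Icc 0 (R ^ 2 + 1)) := by
    apply Continuous.continuousOn; fun_prop
  have h0 : M 0 = 0 := by
    simp only [hM, Real.sqrt_zero]
    rw [zero_pow (by omega), zero_mul]
  have h1 : R ≤ M (R ^ 2 + 1) := by
    have ha : R ≤ √(R ^ 2 + 1) := Real.le_sqrt_of_sq_le (by linarith)
    have ha1 : 1 ≤ √(R ^ 2 + 1) := Real.one_le_sqrt.2 (by nlinarith)
    have hb : 1 ≤ √(c + (R ^ 2 + 1)) := Real.one_le_sqrt.2 (by nlinarith)
    calc R ≤ √(R ^ 2 + 1) := ha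
      _ ≤ √(R ^ 2 + 1) ^ (m₁ + m₂) := le_self_pow₀ ha1 (by omega)
      _ ≤ M (R ^ 2 + 1) := le_mul_of_one_le_right (by positivity) (one_le_pow₀ hb)
  obtain ⟨X, hX, hXR⟩ := intermediate_value_Icc (by positivity) hcont
    (Set.mem_Icc.2 ⟨by rw [h0]; exact hR.le, h1⟩)
  refine ⟨X, lt_of_le_of_ne hX.1 ?_, hXR⟩
  rintro rfl
  rw [h0] at hXR
  linarith

lemma aux_real (m₁ m₂ : ℕ) (hm₁ : 1 ≤ m₁) (c X t R : ℝ) (hc : 1 ≤ c) (hX : 0 < X) (ht : 0 < t)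
    (hR : 0 < R)
    (hXR : √X ^ (m₁ + m₂) * √(c + X) ^ m₂ = R) (hcX : c + X < Real.cosh t) :
    2 * Real.cosh t * Real.sinh t * auxD m₁ m₂ c (Real.cosh t ^ 2) ≤
      2 / R * (Real.sinh t ^ m₁ * Real.sinh (2 * t) ^ m₂) := by
  obtain ⟨k, rfl⟩ : ∃ k, m₁ = k + 1 := ⟨m₁ - 1, by omega⟩
  have ha := Real.cosh_pos t
  have hsh : 0 < Real.sinh t := Real.sinh_pos_iff.2 ht
  have hid := Real.cosh_sq t
  rw [Real.sinh_two_mul, auxD, Real.sqrt_sq ha.le]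
  generalize Real.cosh t = a at *
  generalize Real.sinh t = σ at *
  have hx : 0 < a - c := by linarith
  have hxσ : a - c ≤ σ := by nlinarith
  set N := √(a - c) ^ (k + 1 + m₂) * √a ^ m₂ with hN
  have hN0 : 0 < N := by
    have := Real.sqrt_pos.2 hx
    have := Real.sqrt_pos.2 ha
    positivity
  have hRN : R ≤ N := by
    rw [← hXR, hN]
    gcongr
    linarith
  have hN2 : N * N = (a - c) ^ (k + 1 + m₂) * a ^ m₂ := by
    calc N * N = (√(a - c) ^ 2) ^ (k + 1 + m₂) * (√a ^ 2) ^ m₂ := by rw [hN]; ring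
      _ = _ := by rw [Real.sq_sqrt hx.le, Real.sq_sqrt ha.le]
  have key : R * N ≤ (a - c) * (σ ^ (k + m₂) * (2 * a) ^ m₂) := by
    calc R * N ≤ N * N := by gcongr
      _ = (a - c) * ((a - c) ^ (k + m₂) * a ^ m₂) := by rw [hN2]; ring
      _ ≤ _ := by
        gcongr
        linarith
  calc 2 * a * σ * (N / ((a - c) * a)) = 2 * σ * (R * N) / (R * (a - c)) := by
        field_simp
    _ ≤ 2 * σ * ((a - c) * (σ ^ (k + m₂) * (2 * a) ^ m₂)) / (R * (a - c)) := by gcongr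
    _ = 2 / R * (σ ^ (k + 1) * (2 * σ * a) ^ m₂) := by
        field_simp
        ring

lemma aux_measurable_arcosh : Measurable Real.arcosh := by
  unfold Real.arcosh
  fun_prop

lemma aux_set (m₁ m₂ : ℕ) (hm₁ : 1 ≤ m₁) : ∃ K : ℝ≥0∞, K ≠ ⊤ ∧ ∀ (s : ℝ) (S : Set ℝ),
    MeasurableSet S → ∀ R : ℝ, 0 < R →
    ∫⁻ v : EuclideanSpace ℝ (Fin m₁), ∫⁻ w : EuclideanSpace ℝ (Fin m₂),
      S.indicator (1 : ℝ → ℝ≥0∞) (Real.arcosh √((Real.cosh s + ‖v‖ ^ 2) ^ 2 + ‖w‖ ^ 2)) ≤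
    K * (ENNReal.ofReal R + nuMeasure m₁ m₂ S / ENNReal.ofReal R) := by
  obtain ⟨K₁, hK₁, h₁⟩ := aux_density m₁ m₂ hm₁
  obtain ⟨K₂, hK₂, h₂⟩ := aux_ball m₁ m₂
  refine ⟨K₂ + K₁ * 2, ENNReal.add_ne_top.2 ⟨hK₂, ENNReal.mul_ne_top hK₁ (by simp)⟩, ?_⟩
  intro s S hS R hR
  have hc := Real.one_le_cosh s
  have hc0 := Real.cosh_pos s
  obtain ⟨X, hX, hXR⟩ := aux_level m₁ m₂ hm₁ _ R hc hR
  have hSG : MeasurableSet {y : ℝ | Real.arcosh √y ∈ S ∧ (Real.cosh s + X) ^ 2 < y} := by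
    apply MeasurableSet.inter
    · exact (aux_measurable_arcosh.comp (by fun_prop : Measurable fun y : ℝ => √y)) hS
    · exact measurableSet_Ioi
  set G : ℝ → ℝ≥0∞ := ({y : ℝ | Real.arcosh √y ∈ S ∧ (Real.cosh s + X) ^ 2 < y}).indicator 1
    with hG
  have hGm : Measurable G := measurable_one.indicator hSG
  have hpt : ∀ y : ℝ, S.indicator (1 : ℝ → ℝ≥0∞) (Real.arcosh √y) ≤
      (Set.Iic ((Real.cosh s + X) ^ 2)).indicator (1 : ℝ → ℝ≥0∞) y + G y := by
    intro y
    by_cases hy : Real.arcosh √y ∈ S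
    · rcases le_or_gt y ((Real.cosh s + X) ^ 2) with h | h
      · rw [Set.indicator_of_mem hy, Set.indicator_of_mem (by exact h)]
        exact le_self_add
      · rw [hG, Set.indicator_of_mem hy, Set.indicator_of_mem (s := {y : ℝ | _}) (by exact ⟨hy, h⟩)]
        exact le_add_self
    · rw [Set.indicator_of_notMem hy]
      exact zero_le
  have hb := h₂ (Real.cosh s) X hc0 hX
  rw [hXR] at hb
  have hν : nuMeasure m₁ m₂ S = ∫⁻ t in Set.Ioi (0 : ℝ), S.indicator (fun t =>
      ENNReal.ofReal (Real.sinh t ^ m₁ * Real.sinh (2 * t) ^ m₂)) t := by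
    rw [nuMeasure, withDensity_apply _ hS, lintegral_indicator hS]
  have hd : ∫⁻ v : EuclideanSpace ℝ (Fin m₁), ∫⁻ w : EuclideanSpace ℝ (Fin m₂),
      G ((Real.cosh s + ‖v‖ ^ 2) ^ 2 + ‖w‖ ^ 2) ≤
      K₁ * (ENNReal.ofReal (2 / R) * nuMeasure m₁ m₂ S) := by
    refine (h₁ _ hc0 G hGm).trans (mul_le_mul_right ?_ _)
    refine (aux_cov2 s _).trans ?_
    rw [hν, ← lintegral_const_mul' _ _ ENNReal.ofReal_ne_top]
    refine le_trans ?_ (lintegral_mono_set (Set.Ioi_subset_Ioi (abs_nonneg s)))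
    refine setLIntegral_mono' measurableSet_Ioi fun t ht => ?_
    have ht0 : 0 < t := (abs_nonneg s).trans_lt ht
    by_cases hy : Real.cosh t ^ 2 ∈ {y : ℝ | Real.arcosh √y ∈ S ∧ (Real.cosh s + X) ^ 2 < y}
    · have hy' := hy
      obtain ⟨ha, hb⟩ := hy'
      rw [Real.sqrt_sq (Real.cosh_pos t).le, Real.arcosh_cosh ht0.le] at ha
      have hb' := (pow_lt_pow_iff_left₀ (by positivity) (Real.cosh_pos t).le two_ne_zero).1 hb
      rw [hG, Set.indicator_of_mem hy, Set.indicator_of_mem ha, Pi.one_apply, one_mul,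
        ← ENNReal.ofReal_mul (mul_nonneg (by positivity) (Real.sinh_nonneg_iff.2 ht0.le)),
        ← ENNReal.ofReal_mul (by positivity)]
      exact ENNReal.ofReal_le_ofReal (aux_real m₁ m₂ hm₁ _ X t R hc hX ht0 hR hXR hb')
    · rw [hG, Set.indicator_of_notMem hy]
      simp
  have hm1 : Measurable (fun p : EuclideanSpace ℝ (Fin m₁) × EuclideanSpace ℝ (Fin m₂) =>
      (Set.Iic ((Real.cosh s + X) ^ 2)).indicator (1 : ℝ → ℝ≥0∞)
        ((Real.cosh s + ‖p.1‖ ^ 2) ^ 2 + ‖p.2‖ ^ 2)) :=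
    (measurable_one.indicator measurableSet_Iic).comp (by fun_prop)
  calc _ ≤ ∫⁻ v : EuclideanSpace ℝ (Fin m₁), ∫⁻ w : EuclideanSpace ℝ (Fin m₂),
        ((Set.Iic ((Real.cosh s + X) ^ 2)).indicator (1 : ℝ → ℝ≥0∞)
          ((Real.cosh s + ‖v‖ ^ 2) ^ 2 + ‖w‖ ^ 2) +
          G ((Real.cosh s + ‖v‖ ^ 2) ^ 2 + ‖w‖ ^ 2)) :=
        lintegral_mono fun v => lintegral_mono fun w => hpt _
    _ = (∫⁻ v : EuclideanSpace ℝ (Fin m₁), ∫⁻ w : EuclideanSpace ℝ (Fin m₂),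
        (Set.Iic ((Real.cosh s + X) ^ 2)).indicator (1 : ℝ → ℝ≥0∞)
          ((Real.cosh s + ‖v‖ ^ 2) ^ 2 + ‖w‖ ^ 2)) +
        ∫⁻ v : EuclideanSpace ℝ (Fin m₁), ∫⁻ w : EuclideanSpace ℝ (Fin m₂),
          G ((Real.cosh s + ‖v‖ ^ 2) ^ 2 + ‖w‖ ^ 2) := by
        rw [← lintegral_add_left hm1.lintegral_prod_right']
        refine lintegral_congr fun v => ?_
        exact lintegral_add_left (hm1.comp (measurable_prodMk_left (x := v))) _
    _ ≤ K₂ * ENNReal.ofReal R + K₁ * (ENNReal.ofReal (2 / R) * nuMeasure m₁ m₂ S) :=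
        add_le_add hb hd
    _ = K₂ * ENNReal.ofReal R + K₁ * 2 * (nuMeasure m₁ m₂ S / ENNReal.ofReal R) := by
        rw [ENNReal.ofReal_div_of_pos hR, ENNReal.div_eq_inv_mul, ENNReal.div_eq_inv_mul]
        simp only [ENNReal.ofReal_ofNat]
        ring
    _ ≤ _ := by
        rw [mul_add]
        gcongr
        · exact le_self_add
        · exact le_add_self

lemma aux_opt (K x n : ℝ≥0∞) (hK : K ≠ ⊤)
    (h : ∀ R : ℝ, 0 < R → x ≤ K * (ENNReal.ofReal R + n / ENNReal.ofReal R)) :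
    x ≤ K * (2 * n ^ (1 / 2 : ℝ)) := by
  by_cases hK0 : K = 0
  · simpa [hK0] using h 1 one_pos
  by_cases hn : n = ⊤
  · subst hn
    rw [ENNReal.top_rpow_of_pos (by norm_num)]
    simp [hK0]
  by_cases hn0 : n = 0
  · subst hn0
    have h0 : Filter.Tendsto (fun R : ℝ => K * ENNReal.ofReal R) (nhdsWithin 0 (Set.Ioi 0))
        (nhds (K * ENNReal.ofReal 0)) := by
      apply ENNReal.Tendsto.const_mul _ (Or.inr hK)
      exact (ENNReal.continuous_ofReal.tendsto 0).mono_left nhdsWithin_le_nhds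
    have := ge_of_tendsto h0 (b := x) (by
      filter_upwards [self_mem_nhdsWithin] with R hR
      simpa using h R hR)
    simp only [ENNReal.ofReal_zero, mul_zero] at this
    exact this.trans zero_le
  · have hp : 0 < n.toReal := ENNReal.toReal_pos hn0 hn
    have hR : 0 < n.toReal ^ (1 / 2 : ℝ) := Real.rpow_pos_of_pos hp _
    have := h _ hR
    rw [← ENNReal.ofReal_rpow_of_pos hp, ENNReal.ofReal_toReal hn] at this
    refine this.trans (le_of_eq ?_)
    congr 1
    have hdiv : n / n ^ (1 / 2 : ℝ) = n ^ (1 / 2 : ℝ) := by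
      nth_rewrite 1 [← ENNReal.rpow_one n]
      rw [← ENNReal.rpow_sub _ _ hn0 hn]
      norm_num
    rw [hdiv, two_mul]

/-- **Proposition 2** (coordinate form): the Abel transform is bounded from
`L^{2,1}(G//K)` to `L^∞(A/W)`.  Here `T s v w` is the unique `t ≥ |s|` with
`(cosh t)² = (cosh s + eˢ|v|²)² + e^{2s}|w|²`, and `ρ = (m₁ + 2m₂)/2`. -/
theorem abel_transform_L21_Linfty (m₁ m₂ : ℕ) (hm₁ : 1 ≤ m₁)
    (T : ℝ → EuclideanSpace ℝ (Fin m₁) → EuclideanSpace ℝ (Fin m₂) → ℝ)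
    (hT : ∀ (s : ℝ) (v : EuclideanSpace ℝ (Fin m₁)) (w : EuclideanSpace ℝ (Fin m₂)),
      |s| ≤ T s v w ∧
      Real.cosh (T s v w) ^ 2 =
        (Real.cosh s + Real.exp s * ‖v‖ ^ 2) ^ 2 + Real.exp (2 * s) * ‖w‖ ^ 2) :
    ∃ C : ℝ≥0, ∀ (s : ℝ) (F : ℝ → ℝ≥0∞), Measurable F →
      ENNReal.ofReal (Real.exp (((m₁ : ℝ) + 2 * (m₂ : ℝ)) / 2 * s)) *
          (∫⁻ p : EuclideanSpace ℝ (Fin m₁) × EuclideanSpace ℝ (Fin m₂),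
            F (T s p.1 p.2)) ≤
        C * lorentz21 (nuMeasure m₁ m₂) F := by
  obtain ⟨K, hK, h⟩ := aux_set m₁ m₂ hm₁
  refine ⟨K.toNNReal, ?_⟩
  intro s F hF
  rw [ENNReal.coe_toNNReal hK]
  have hTe : ∀ v w, T s v w = Real.arcosh √((Real.cosh s + (Real.exp (s / 2) * ‖v‖) ^ 2) ^ 2 +
      (Real.exp s * ‖w‖) ^ 2) := by
    intro v w
    obtain ⟨h1, h2⟩ := hT s v w
    have e1 : (Real.exp (s / 2) * ‖v‖) ^ 2 = Real.exp s * ‖v‖ ^ 2 := by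
      rw [mul_pow, ← Real.exp_nat_mul]
      congr 2
      push_cast; ring
    have e2 : (Real.exp s * ‖w‖) ^ 2 = Real.exp (2 * s) * ‖w‖ ^ 2 := by
      rw [mul_pow, ← Real.exp_nat_mul]
      norm_num
    rw [e1, e2, ← h2, Real.sqrt_sq (Real.cosh_pos _).le,
      Real.arcosh_cosh ((abs_nonneg s).trans h1)]
  have hTm : Measurable (fun p : EuclideanSpace ℝ (Fin m₁) × EuclideanSpace ℝ (Fin m₂) =>
      T s p.1 p.2) := by
    simp only [hTe]
    exact aux_measurable_arcosh.comp (by fun_prop)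
  rw [aux_layer _ (fun p : EuclideanSpace ℝ (Fin m₁) × EuclideanSpace ℝ (Fin m₂) =>
      F (T s p.1 p.2)) (hF.comp hTm), ← lintegral_const_mul' _ _ ENNReal.ofReal_ne_top,
    lorentz21, ← lintegral_const_mul' _ _ (by simp), ← lintegral_const_mul' _ _ hK]
  refine lintegral_mono fun l => ?_
  refine aux_opt K _ _ hK fun R hR => ?_
  have hS : MeasurableSet {t : ℝ | ENNReal.ofReal l < F t} :=
    measurableSet_lt (by fun_prop) hF
  refine le_trans (le_of_eq ?_) (h s _ hS R hR)
  have hH : Measurable (Function.uncurry fun r q : ℝ =>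
      ({t : ℝ | ENNReal.ofReal l < F t}).indicator (1 : ℝ → ℝ≥0∞)
        (Real.arcosh √((Real.cosh s + r ^ 2) ^ 2 + q ^ 2))) :=
    (measurable_one.indicator hS).comp (aux_measurable_arcosh.comp
      (by fun_prop : Measurable fun p : ℝ × ℝ => √((Real.cosh s + p.1 ^ 2) ^ 2 + p.2 ^ 2)))
  rw [← aux_scale m₁ m₂ s _ hH]
  congr 1
  simp only [← hTe]
  have hS' : MeasurableSet {p : EuclideanSpace ℝ (Fin m₁) × EuclideanSpace ℝ (Fin m₂) |
      ENNReal.ofReal l < F (T s p.1 p.2)} := hTm hS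
  rw [← lintegral_indicator_one hS']
  refine lintegral_congr fun p => ?_
  simp [Set.indicator]

end
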